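/- arXiv:2208.09265 — 9 statements merged into one kernel-verified Lean document; each statement's English description precedes it below -/
import Mathlib

section
/- For every positive integer b and every positive integer m, the sum over j from 1 to m of F(b,j) is at most 2.8; that is, \(\sum_{j=1}^{m} b^2 \binom{(j+2)b-2}{b-1} (1/2)^{(j+2)b-1} \le 2.8\). -/
/-- `F b j = b² · C((j+2)b − 2, b − 1) · (1/2)^((j+2)b − 1)`, the bound on the
expected number of holes in region `j` for local-buffer size `b`. -/
noncomputable def F (b j : ℕ) : ℝ :=
  (b : ℝ) ^ 2 * (Nat.choose ((j + 2) * b - 2) (b - 1) : ℝ) * (1 / 2) ^ ((j + 2) * b - 1)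

theorem desc_aux (n b : ℕ) : ∀ k, b + k ≤ n + 1 →
    (n + b).descFactorial k ≤ 2 ^ k * n.descFactorial k := by
  intro k
  induction k with
  | zero => simp
  | succ k ih =>
    intro h
    rw [Nat.descFactorial_succ, Nat.descFactorial_succ, pow_succ]
    calc (n + b - k) * (n + b).descFactorial k
        ≤ (2 * (n - k)) * (2 ^ k * n.descFactorial k) :=
          Nat.mul_le_mul (by omega) (ih (by omega))
      _ = _ := by ring

theorem choose_aux (n b k : ℕ) (h : b + k ≤ n + 1) :
    (n + b).choose k ≤ 2 ^ k * n.choose k := by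
  have h1 := desc_aux n b k h
  rw [Nat.descFactorial_eq_factorial_mul_choose, Nat.descFactorial_eq_factorial_mul_choose] at h1
  have := Nat.factorial_pos k
  refine Nat.le_of_mul_le_mul_left (c := k.factorial) ?_ this
  calc _ ≤ _ := h1
    _ = _ := by ring

theorem F_step (b j : ℕ) (hb : 0 < b) : F b (j + 1) ≤ F b j / 2 := by
  obtain ⟨c, rfl⟩ : ∃ c, b = c + 1 := ⟨b - 1, by omega⟩
  unfold F
  have e1 : (j + 1 + 2) * (c + 1) - 2 = ((j + 2) * (c + 1) - 2) + (c + 1) := by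
    have : (j + 1 + 2) * (c + 1) = (j + 2) * (c + 1) + (c + 1) := by ring
    have : 2 ≤ (j + 2) * (c + 1) := by nlinarith
    omega
  have e2 : (j + 1 + 2) * (c + 1) - 1 = ((j + 2) * (c + 1) - 1) + (c + 1) := by
    have : (j + 1 + 2) * (c + 1) = (j + 2) * (c + 1) + (c + 1) := by ring
    have : 2 ≤ (j + 2) * (c + 1) := by nlinarith
    omega
  have h3 : (c + 1) + c ≤ ((j + 2) * (c + 1) - 2) + 1 := by
    have : 2 * (c + 1) ≤ (j + 2) * (c + 1) := Nat.mul_le_mul_right _ (by omega)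
    omega
  have h := choose_aux _ _ _ h3
  rw [e1, e2, Nat.add_sub_cancel, pow_add, pow_succ (1 / 2 : ℝ) c]
  generalize (j + 2) * (c + 1) - 2 = n at *
  have h' : ((n + (c + 1)).choose c : ℝ) ≤ 2 ^ c * n.choose c := by exact_mod_cast h
  have hp : (2 : ℝ) ^ c * (1 / 2) ^ c = 1 := by rw [← mul_pow]; norm_num
  generalize (j + 2) * (c + 1) - 1 = q at *
  calc _ ≤ (((c + 1 : ℕ) : ℝ)) ^ 2 * (2 ^ c * n.choose c) * ((1 / 2) ^ q * ((1 / 2) ^ c * (1 / 2))) := by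
        gcongr
    _ = (((c + 1 : ℕ) : ℝ)) ^ 2 * n.choose c * (1 / 2) ^ q / 2 * (2 ^ c * (1 / 2) ^ c) := by ring
    _ = _ := by rw [hp, mul_one]

theorem choose_id (c : ℕ) : (3 * c + 4).choose (c + 1) * ((c + 1) * (2 * c + 3) * (2 * c + 2))
    = (3 * c + 1).choose c * ((3 * c + 4) * (3 * c + 3) * (3 * c + 2)) := by
  have h1 := Nat.add_one_mul_choose_eq (3 * c + 3) c
  have h2 := Nat.choose_mul_succ_eq (3 * c + 2) c
  have h3 := Nat.choose_mul_succ_eq (3 * c + 1) c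
  rw [show 3 * c + 2 + 1 - c = 2 * c + 3 by omega] at h2
  rw [show 3 * c + 1 + 1 - c = 2 * c + 2 by omega] at h3
  simp only [add_assoc, Nat.reduceAdd] at h1 h2 h3
  calc _ = ((3 * c + 4).choose (c + 1) * (c + 1)) * ((2 * c + 3) * (2 * c + 2)) := by ring
    _ = (3 * c + 4) * ((3 * c + 3).choose c * (2 * c + 3)) * (2 * c + 2) := by rw [← h1]; ring
    _ = (3 * c + 4) * (3 * c + 3) * ((3 * c + 2).choose c * (2 * c + 2)) := by rw [← h2]; ring
    _ = _ := by rw [← h3]; ring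

theorem F_one (c : ℕ) : F (c + 1) 1 =
    ((c : ℝ) + 1) ^ 2 * ((3 * c + 1).choose c : ℝ) * (1 / 2) ^ (3 * c + 2) := by
  unfold F
  rw [show (1 + 2) * (c + 1) - 2 = 3 * c + 1 by omega,
    show (1 + 2) * (c + 1) - 1 = 3 * c + 2 by omega]
  simp

theorem key_aux (x : ℝ) (hx : 8 ≤ x) : (x + 2) ^ 2 * ((3 * x + 4) * (3 * x + 3) * (3 * x + 2)) /
      ((x + 1) * (2 * x + 3) * (2 * x + 2)) / 8 ≤ (x + 1) ^ 2 := by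
  obtain ⟨d, hd, rfl⟩ : ∃ d : ℝ, 0 ≤ d ∧ x = d + 8 := ⟨x - 8, by linarith, by ring⟩
  rw [div_div, div_le_iff₀ (by positivity), ← sub_nonneg]
  ring_nf
  positivity

theorem F_one_anti (c : ℕ) (hc : 8 ≤ c) : F (c + 2) 1 ≤ F (c + 1) 1 := by
  rw [F_one (c + 1), F_one c]
  have h : ((3 * c + 4).choose (c + 1) : ℝ) * ((c + 1) * (2 * c + 3) * (2 * c + 2))
    = (3 * c + 1).choose c * ((3 * c + 4) * (3 * c + 3) * (3 * c + 2)) := by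
    exact_mod_cast choose_id c
  rw [show 3 * (c + 1) + 1 = 3 * c + 4 by ring, show 3 * (c + 1) + 2 = (3 * c + 2) + 3 by ring,
    pow_add]
  have hpos : (0 : ℝ) < (c + 1) * (2 * c + 3) * (2 * c + 2) := by positivity
  have h' := eq_div_of_mul_eq hpos.ne' h
  rw [h']
  have key : ((c : ℝ) + 2) ^ 2 * ((3 * c + 4) * (3 * c + 3) * (3 * c + 2)) /
      ((c + 1) * (2 * c + 3) * (2 * c + 2)) / 8 ≤ (c + 1) ^ 2 := key_aux c (by exact_mod_cast hc)
  have := mul_le_mul_of_nonneg_right key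
    (show (0 : ℝ) ≤ ((3 * c + 1).choose c : ℝ) * (1 / 2) ^ (3 * c + 2) by positivity)
  push_cast
  calc _ = _ := by ring
    _ ≤ _ := this
    _ = _ := by ring

theorem F_one_le_s0 (c : ℕ) : F (c + 1) 1 ≤ 1.4 := by
  by_cases h : c ≤ 8
  · rw [F_one]
    interval_cases c <;> norm_num [Nat.choose]
  · have : 8 ≤ c := by omega
    clear h
    induction c, this using Nat.le_induction with
    | base => rw [F_one]; norm_num [Nat.choose]
    | succ n hn ih => exact (F_one_anti n hn).trans ih

theorem sum_aux (b m : ℕ) (hb : 0 < b) :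
    ∑ j ∈ Finset.Icc 1 m, F b j + 2 * F b (m + 1) ≤ 2 * F b 1 := by
  induction m with
  | zero => simp
  | succ m ih =>
    rw [Finset.sum_Icc_succ_top (by omega)]
    have := F_step b (m + 1) hb
    linarith

theorem sum_F_le :
    ∀ b m : ℕ, 0 < b → 0 < m → ∑ j ∈ Finset.Icc 1 m, F b j ≤ 2.8 := by
  intro b m hb _
  have h1 := sum_aux b m hb
  have h2 : 0 ≤ F b (m + 1) := by unfold F; positivity
  obtain ⟨c, rfl⟩ : ∃ c, b = c + 1 := ⟨b - 1, by omega⟩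
  have h3 := F_one_le_s0 c
  norm_num at h3 ⊢
  linarith
end

section
/- For every positive integer b, F(b,1) ≤ 1.4; that is, \(b^2 \binom{3b-2}{b-1} (1/2)^{3b-1} \le 1.4\). -/
theorem choose_step_aux (n : ℕ) :
    Nat.choose (3*n+4) (n+1) * ((n+1)*(2*n+3)*(2*n+2))
      = Nat.choose (3*n+1) n * ((3*n+4)*(3*n+3)*(3*n+2)) := by
  have h1 := Nat.add_one_mul_choose_eq (3*n+3) n
  have h2 := Nat.choose_mul_succ_eq (3*n+2) n
  have h3 := Nat.choose_mul_succ_eq (3*n+1) n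
  rw [show 3*n+2+1-n = 2*n+3 by omega] at h2
  rw [show 3*n+1+1-n = 2*n+2 by omega] at h3
  simp only [Nat.add_assoc, Nat.reduceAdd] at h1 h2 h3
  calc _ = (Nat.choose (3*n+4) (n+1) * (n+1)) * ((2*n+3)*(2*n+2)) := by ring
    _ = (3*n+4) * (Nat.choose (3*n+3) n * (2*n+3)) * (2*n+2) := by rw [← h1]; ring
    _ = (3*n+4) * (3*n+3) * (Nat.choose (3*n+2) n * (2*n+2)) := by rw [← h2]; ring
    _ = _ := by rw [← h3]; ring

theorem nat_bound_aux (n : ℕ) :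
    (n+1)^2 * Nat.choose (3*n+1) n * 5 ≤ 7 * 2^(3*n+2) := by
  rcases Nat.lt_or_ge n 20 with h | h
  · interval_cases n <;> norm_num [Nat.choose_eq_factorial_div_factorial, Nat.factorial]
  · induction n, h using Nat.le_induction with
    | base => norm_num [Nat.choose_eq_factorial_div_factorial, Nat.factorial]
    | succ n hn ih =>
      have hs := choose_step_aux n
      have hp : (n+2)^2 * ((3*n+4)*(3*n+3)*(3*n+2))
          ≤ 8 * (n+1)^2 * ((n+1)*(2*n+3)*(2*n+2)) := by
        obtain ⟨m, rfl⟩ := Nat.exists_eq_add_of_le hn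
        ring_nf
        gcongr <;> norm_num
      have hpos : 0 < (n+1)*(2*n+3)*(2*n+2) := by positivity
      refine Nat.le_of_mul_le_mul_right ?_ hpos
      rw [show 3*(n+1)+1 = 3*n+4 by ring, show 3*(n+1)+2 = (3*n+2)+3 by ring, pow_add 2]
      calc _ = (n+2)^2 * (Nat.choose (3*n+4) (n+1) * ((n+1)*(2*n+3)*(2*n+2))) * 5 := by ring
        _ = Nat.choose (3*n+1) n * 5 * ((n+2)^2 * ((3*n+4)*(3*n+3)*(3*n+2))) := by rw [hs]; ring
        _ ≤ Nat.choose (3*n+1) n * 5 * (8 * (n+1)^2 * ((n+1)*(2*n+3)*(2*n+2))) :=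
            Nat.mul_le_mul_left _ hp
        _ = ((n+1)^2 * Nat.choose (3*n+1) n * 5) * (8 * ((n+1)*(2*n+3)*(2*n+2))) := by ring
        _ ≤ (7 * 2^(3*n+2)) * (8 * ((n+1)*(2*n+3)*(2*n+2))) := Nat.mul_le_mul_right _ ih
        _ = _ := by ring

theorem F_one_le : ∀ b : ℕ, 0 < b → F b 1 ≤ 1.4 := by
  intro b hb
  obtain ⟨n, rfl⟩ : ∃ n, b = n + 1 := ⟨b - 1, by omega⟩
  have h := nat_bound_aux n
  have h' : ((n:ℝ)+1)^2 * (Nat.choose (3*n+1) n : ℝ) * 5 ≤ 7 * 2^(3*n+2) := by exact_mod_cast h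
  unfold F
  rw [show (1+2)*(n+1)-2 = 3*n+1 by omega, show (1+2)*(n+1)-1 = 3*n+2 by omega,
    show n+1-1 = n by omega, one_div, inv_pow, ← div_eq_mul_inv, div_le_iff₀ (by positivity)]
  push_cast
  linarith
end

section
/- For every positive integer b and every positive integer j, F(b,j+1) ≤ (1/2) · F(b,j); that is, \(b^2 \binom{(j+3)b-2}{b-1} (1/2)^{(j+3)b-1} \le \tfrac{1}{2}\, b^2 \binom{(j+2)b-2}{b-1} (1/2)^{(j+2)b-1}\). -/
theorem descFactorial_add_le (m b : ℕ) : ∀ k : ℕ, k + b ≤ m + 1 →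
    (m + b).descFactorial k ≤ 2 ^ k * m.descFactorial k := by
  intro k
  induction k with
  | zero => simp
  | succ k ih =>
    intro h
    rw [Nat.descFactorial_succ, Nat.descFactorial_succ, pow_succ]
    calc (m + b - k) * (m + b).descFactorial k
        ≤ (2 * (m - k)) * (2 ^ k * m.descFactorial k) :=
          Nat.mul_le_mul (by omega) (ih (by omega))
      _ = _ := by ring

theorem choose_add_le (m b k : ℕ) (h : k + b ≤ m + 1) :
    (m + b).choose k ≤ 2 ^ k * m.choose k := by
  have h1 := descFactorial_add_le m b k h
  rw [Nat.descFactorial_eq_factorial_mul_choose, Nat.descFactorial_eq_factorial_mul_choose] at h1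
  refine Nat.le_of_mul_le_mul_left ?_ (Nat.factorial_pos k)
  calc _ ≤ _ := h1
    _ = _ := by ring

theorem F_succ_le_half :
    ∀ b j : ℕ, 0 < b → 0 < j → F b (j + 1) ≤ (1 / 2) * F b j := by
  intro b j hb hj
  obtain ⟨c, rfl⟩ : ∃ c, b = c + 1 := ⟨b - 1, by omega⟩
  obtain ⟨i, rfl⟩ : ∃ i, j = i + 1 := ⟨j - 1, by omega⟩
  obtain ⟨m, hm⟩ : ∃ m, (i + 1 + 2) * (c + 1) = m + 2 := by
    refine ⟨(i + 1 + 2) * (c + 1) - 2, ?_⟩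
    have : (i + 1 + 2) * (c + 1) = i * (c + 1) + 3 * c + 3 := by ring
    omega
  have hm' : (i + 1 + 1 + 2) * (c + 1) = m + (c + 1) + 2 := by
    linear_combination hm
  have hle : c + (c + 1) ≤ m + 1 := by
    have : (i + 1 + 2) * (c + 1) = i * (c + 1) + 3 * c + 3 := by ring
    omega
  have key : ((m + (c + 1)).choose c : ℝ) ≤ 2 ^ c * (m.choose c : ℝ) := by
    exact_mod_cast choose_add_le m (c + 1) c hle
  unfold F
  rw [hm, hm']
  have e1 : m + (c + 1) + 2 - 2 = m + (c + 1) := by omega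
  have e2 : m + (c + 1) + 2 - 1 = (m + 1) + 1 + c := by omega
  have e3 : m + 2 - 2 = m := by omega
  have e4 : m + 2 - 1 = m + 1 := by omega
  have e5 : c + 1 - 1 = c := by omega
  rw [e1, e2, e3, e4, e5, pow_add _ _ c, pow_succ _ (m + 1)]
  have h2 : (2 : ℝ) ^ c * (1 / 2) ^ c = 1 := by
    rw [← mul_pow]; norm_num
  calc _ ≤ ((c + 1 : ℕ) : ℝ) ^ 2 * (2 ^ c * (m.choose c : ℝ)) *
          ((1 / 2) ^ (m + 1) * (1 / 2) * (1 / 2) ^ c) := by gcongr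
    _ = ((c + 1 : ℕ) : ℝ) ^ 2 * (m.choose c : ℝ) * ((1 / 2) ^ (m + 1) * (1 / 2)) *
          (2 ^ c * (1 / 2) ^ c) := by ring
    _ = _ := by rw [h2]; ring
end

section
/- For every positive integer b and every positive integer j, \((1/2)^{b-1} \binom{(j+3)b-2}{b-1} \le \binom{(j+2)b-2}{b-1}\). -/
theorem descFactorial_le_aux (M N : ℕ) : ∀ k : ℕ, M + k ≤ 2 * N + 1 →
    M.descFactorial k ≤ 2 ^ k * N.descFactorial k := by
  intro k
  induction k with
  | zero => intro _; simp
  | succ k ih =>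
    intro h
    rw [Nat.descFactorial_succ, Nat.descFactorial_succ]
    calc (M - k) * M.descFactorial k
        ≤ (2 * (N - k)) * (2 ^ k * N.descFactorial k) :=
          Nat.mul_le_mul (by omega) (ih (by omega))
      _ = _ := by ring

theorem half_pow_mul_choose_le :
    ∀ b j : ℕ, 0 < b → 0 < j →
      (1 / 2 : ℝ) ^ (b - 1) * (Nat.choose ((j + 3) * b - 2) (b - 1) : ℝ) ≤
        (Nat.choose ((j + 2) * b - 2) (b - 1) : ℝ) := by
  intro b j hb hj
  have hjb : b ≤ j * b := Nat.le_mul_of_pos_left b hj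
  have h := descFactorial_le_aux ((j + 3) * b - 2) ((j + 2) * b - 2) (b - 1) (by
    rw [add_mul, add_mul]; omega)
  rw [Nat.descFactorial_eq_factorial_mul_choose, Nat.descFactorial_eq_factorial_mul_choose,
    mul_left_comm] at h
  have h2 := Nat.le_of_mul_le_mul_left h (Nat.factorial_pos _)
  have h3 : (Nat.choose ((j + 3) * b - 2) (b - 1) : ℝ) ≤
      2 ^ (b - 1) * (Nat.choose ((j + 2) * b - 2) (b - 1) : ℝ) := by exact_mod_cast h2
  calc _ ≤ (1 / 2 : ℝ) ^ (b - 1) *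
        (2 ^ (b - 1) * (Nat.choose ((j + 2) * b - 2) (b - 1) : ℝ)) := by gcongr
    _ = _ := by rw [← mul_assoc, ← mul_pow]; norm_num
end

section
/- For every positive integer b, every positive integer j, and every natural number i with 0 ≤ i ≤ b − 2, \((1/2)^{jb+2i+1} \binom{jb+2i}{i} \le (1/2)^{jb+2(i+1)+1} \binom{jb+2(i+1)}{i+1}\); that is, the function f_{b,j}(i) is monotonically increasing for i in {0, 1, …, b−1}. -/
theorem f_aux (m i : ℕ) (h : i + 2 ≤ m) :
    4 * Nat.choose (m + 2 * i) i ≤ Nat.choose (m + 2 * (i + 1)) (i + 1) := by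
  have h1 := Nat.add_one_mul_choose_eq (m + 2 * i + 1) i
  have h2 := Nat.choose_mul_succ_eq (m + 2 * i) i
  have e : m + 2 * i + 1 - i = m + i + 1 := by omega
  rw [e] at h2
  have e2 : m + 2 * (i + 1) = m + 2 * i + 1 + 1 := by ring
  rw [e2]
  generalize Nat.choose (m + 2 * i + 1 + 1) (i + 1) = C at *
  generalize Nat.choose (m + 2 * i + 1) i = B at *
  generalize Nat.choose (m + 2 * i) i = A at *
  have h3 : C * ((i + 1) * (m + i + 1)) = A * ((m + 2 * i + 1) * (m + 2 * i + 2)) := by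
    calc C * ((i + 1) * (m + i + 1)) = (C * (i + 1)) * (m + i + 1) := by ring
      _ = (m + 2 * i + 2) * (B * (m + i + 1)) := by rw [← h1]; ring
      _ = _ := by rw [← h2]; ring
  have h4 : 4 * ((i + 1) * (m + i + 1)) ≤ (m + 2 * i + 1) * (m + 2 * i + 2) := by
    obtain ⟨k, rfl⟩ := Nat.exists_eq_add_of_le h
    ring_nf
    nlinarith [Nat.zero_le (i * k), Nat.zero_le (i * i), Nat.zero_le (k * k)]
  refine Nat.le_of_mul_le_mul_right (c := (i + 1) * (m + i + 1)) ?_ (by positivity)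
  rw [h3]
  calc _ = A * (4 * ((i + 1) * (m + i + 1))) := by ring
    _ ≤ _ := Nat.mul_le_mul_left _ h4

theorem f_monotone :
    ∀ b j : ℕ, 0 < b → 0 < j → ∀ i : ℕ, (i : ℤ) ≤ (b : ℤ) - 2 →
      (1 / 2 : ℝ) ^ (j * b + 2 * i + 1) * (Nat.choose (j * b + 2 * i) i : ℝ) ≤
        (1 / 2 : ℝ) ^ (j * b + 2 * (i + 1) + 1) *
          (Nat.choose (j * b + 2 * (i + 1)) (i + 1) : ℝ) := by
  intro b j hb hj i hi
  have hm : i + 2 ≤ j * b := le_trans (by omega) (Nat.le_mul_of_pos_left b hj)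
  have h := f_aux (j * b) i hm
  have h' : (4 : ℝ) * (Nat.choose (j * b + 2 * i) i : ℝ) ≤
      (Nat.choose (j * b + 2 * (i + 1)) (i + 1) : ℝ) := by exact_mod_cast h
  have e : (1 / 2 : ℝ) ^ (j * b + 2 * (i + 1) + 1) =
      (1 / 2 : ℝ) ^ (j * b + 2 * i + 1) * (1 / 4) := by
    rw [show j * b + 2 * (i + 1) + 1 = (j * b + 2 * i + 1) + 2 by ring, pow_add]
    norm_num
  rw [e, mul_assoc]
  apply mul_le_mul_of_nonneg_left _ (by positivity)
  linarith
end

section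
/- Fix integers j ≥ 1 and b ≥ 3. The real-valued function \(g(x) = \frac{1}{4} \cdot \frac{(jb+2x+2)(jb+2x+1)}{(jb+x+1)(x+1)}\) is monotonically decreasing on the interval 0 ≤ x ≤ b − 1; that is, for all real x, y with 0 ≤ x ≤ y ≤ b − 1, g(y) ≤ g(x). -/
theorem g_antitone :
    ∀ j b : ℕ, 1 ≤ j → 3 ≤ b → ∀ x y : ℝ, 0 ≤ x → x ≤ y → y ≤ (b : ℝ) - 1 →
      (1 / 4) * (((j : ℝ) * b + 2 * y + 2) * ((j : ℝ) * b + 2 * y + 1)) /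
          (((j : ℝ) * b + y + 1) * (y + 1)) ≤
        (1 / 4) * (((j : ℝ) * b + 2 * x + 2) * ((j : ℝ) * b + 2 * x + 1)) /
          (((j : ℝ) * b + x + 1) * (x + 1)) := by
  intro j b hj hb x y hx hxy hy
  have hj' : (1 : ℝ) ≤ j := by exact_mod_cast hj
  have hb' : (3 : ℝ) ≤ b := by exact_mod_cast hb
  have hab : (b : ℝ) ≤ (j : ℝ) * b := by nlinarith
  generalize (j : ℝ) * b = a at *
  have ha : 3 ≤ a := by linarith
  have hA : 0 ≤ a ^ 2 - a - 2 * (y + 1) := by nlinarith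
  have hD : (a + x + 1) * (x + 1) ≤ (a + y + 1) * (y + 1) := by
    apply mul_le_mul <;> linarith
  have hD0 : 0 < (a + x + 1) * (x + 1) := by positivity
  have hD1 : 0 < (a + y + 1) * (y + 1) := lt_of_lt_of_le hD0 hD
  rw [div_le_div_iff₀ hD1 hD0]
  have h1 := mul_le_mul_of_nonneg_left hD hA
  have h2 := mul_nonneg (sub_nonneg.2 hxy) hD1.le
  linarith
end

section
/- For every integer b ≥ 12, F(b+1,1) ≤ F(b,1); that is, \((b+1)^2 \binom{3b+1}{b} (1/2)^{3b+2} \le b^2 \binom{3b-2}{b-1} (1/2)^{3b-1}\). -/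
theorem F_one_aux (n : ℕ) : Nat.choose (3 * n + 4) (n + 1) * ((n + 1) * (2 * n + 3) * (2 * n + 2))
    = Nat.choose (3 * n + 1) n * ((3 * n + 4) * (3 * n + 3) * (3 * n + 2)) := by
  have h1 := Nat.add_choose_mul_factorial_mul_factorial (2 * n + 1) n
  have h2 := Nat.add_choose_mul_factorial_mul_factorial (2 * n + 3) (n + 1)
  rw [show 2 * n + 1 + n = 3 * n + 1 by ring] at h1
  rw [show 2 * n + 3 + (n + 1) = 3 * n + 4 by ring] at h2
  rw [Nat.factorial_succ n, Nat.factorial_succ (2 * n + 2), Nat.factorial_succ (2 * n + 1),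
    Nat.factorial_succ (3 * n + 3), Nat.factorial_succ (3 * n + 2),
    Nat.factorial_succ (3 * n + 1), ← h1] at h2
  have hp : 0 < n.factorial * (2 * n + 1).factorial :=
    Nat.mul_pos n.factorial_pos (2 * n + 1).factorial_pos
  apply Nat.eq_of_mul_eq_mul_right hp
  linarith

theorem F_one_decreasing :
    ∀ b : ℕ, 12 ≤ b →
      ((b : ℝ) + 1) ^ 2 * (Nat.choose (3 * b + 1) b : ℝ) * (1 / 2) ^ (3 * b + 2) ≤
        (b : ℝ) ^ 2 * (Nat.choose (3 * b - 2) (b - 1) : ℝ) * (1 / 2) ^ (3 * b - 1) := by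
  intro b hb
  obtain ⟨m, rfl⟩ : ∃ m, b = m + 11 + 1 := ⟨b - 12, by omega⟩
  have h := F_one_aux (m + 11)
  rw [show 3 * (m + 11 + 1) - 2 = 3 * (m + 11) + 1 by omega,
    show 3 * (m + 11 + 1) - 1 = 3 * (m + 11) + 2 by omega,
    show 3 * (m + 11 + 1) + 2 = 3 * (m + 11) + 2 + 3 by omega,
    show 3 * (m + 11 + 1) + 1 = 3 * (m + 11) + 4 by omega,
    show m + 11 + 1 - 1 = m + 11 by omega, pow_add _ _ 3, ← mul_assoc, mul_right_comm]
  apply mul_le_mul_of_nonneg_right _ (by positivity)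
  have h' : ((Nat.choose (3 * (m + 11) + 4) (m + 11 + 1) * ((m + 11 + 1) * (2 * (m + 11) + 3) * (2 * (m + 11) + 2)) : ℕ) : ℝ) = ((Nat.choose (3 * (m + 11) + 1) (m + 11) * ((3 * (m + 11) + 4) * (3 * (m + 11) + 3) * (3 * (m + 11) + 2)) : ℕ) : ℝ) := by
    exact_mod_cast h
  generalize Nat.choose (3 * (m + 11) + 4) (m + 11 + 1) = A at *
  generalize Nat.choose (3 * (m + 11) + 1) (m + 11) = C at *
  push_cast at h' ⊢
  have hx : (0 : ℝ) ≤ m := Nat.cast_nonneg m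
  have hC : (0 : ℝ) ≤ C := Nat.cast_nonneg C
  generalize (m : ℝ) = x at *
  generalize (A : ℝ) = a at *
  generalize (C : ℝ) = c at *
  have hP : 0 < (x + 11 + 1) * (2 * (x + 11) + 3) * (2 * (x + 11) + 2) := by positivity
  apply le_of_mul_le_mul_right _ hP
  have e : (x + 11 + 1 + 1) ^ 2 * a * (1 / 2) ^ 3 * ((x + 11 + 1) * (2 * (x + 11) + 3) * (2 * (x + 11) + 2)) = c * ((x + 11 + 1 + 1) ^ 2 * (1 / 2) ^ 3 * ((3 * (x + 11) + 4) * (3 * (x + 11) + 3) * (3 * (x + 11) + 2))) := by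
    linear_combination (x + 11 + 1 + 1) ^ 2 * (1 / 2) ^ 3 * h'
  rw [e, mul_comm ((x + 11 + 1) ^ 2) c, mul_assoc c]
  apply mul_le_mul_of_nonneg_left _ hC
  rw [← sub_nonneg]
  ring_nf
  positivity
end

section
/- For every positive integer b and every positive integer j, \(\sum_{i=0}^{b-1} (1/2)^{jb+2i+1} \binom{jb+2i}{i} \le b \cdot (1/2)^{(j+2)b-1} \binom{(j+2)b-2}{b-1}\). -/
theorem choose_step (m i : ℕ) (h : m + 2 * i + 2 ≤ m * m) :
    4 * Nat.choose (m + 2 * i) i ≤ Nat.choose (m + 2 * (i + 1)) (i + 1) := by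
  have h1 := Nat.choose_mul_succ_eq (m + 2 * i) i
  have h2 := Nat.add_one_mul_choose_eq (m + 2 * i + 1) i
  have e : m + 2 * i + 1 - i = m + i + 1 := by omega
  rw [e] at h1
  have e2 : m + 2 * (i + 1) = (m + 2 * i + 1).succ := by omega
  rw [e2]
  simp only [Nat.succ_eq_add_one] at *
  generalize Nat.choose (m + 2 * i) i = A at *
  generalize Nat.choose (m + 2 * i + 1) i = B at *
  generalize Nat.choose (m + 2 * i + 1 + 1) (i + 1) = C at *
  have h3 : C * ((i + 1) * (m + i + 1)) = A * ((m + 2 * i + 1) * (m + 2 * i + 2)) := by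
    calc C * ((i + 1) * (m + i + 1)) = (C * (i + 1)) * (m + i + 1) := by ring
      _ = (m + 2 * i + 2) * (B * (m + i + 1)) := by rw [← h2]; ring
      _ = _ := by rw [← h1]; ring
  have h4 : 4 * ((i + 1) * (m + i + 1)) ≤ (m + 2 * i + 1) * (m + 2 * i + 2) := by
    nlinarith
  refine Nat.le_of_mul_le_mul_right (c := (i + 1) * (m + i + 1)) ?_ (by positivity)
  rw [h3]
  calc 4 * A * ((i + 1) * (m + i + 1)) = A * (4 * ((i + 1) * (m + i + 1))) := by ring
    _ ≤ _ := Nat.mul_le_mul_left _ h4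

theorem sum_f_le :
    ∀ b j : ℕ, 0 < b → 0 < j →
      ∑ i ∈ Finset.range b,
          (1 / 2 : ℝ) ^ (j * b + 2 * i + 1) * (Nat.choose (j * b + 2 * i) i : ℝ) ≤
        (b : ℝ) * (1 / 2) ^ ((j + 2) * b - 1) *
          (Nat.choose ((j + 2) * b - 2) (b - 1) : ℝ) := by
  intro b j hb hj
  obtain ⟨c, rfl⟩ : ∃ c, b = c + 1 := ⟨b - 1, by omega⟩
  have hm : c + 1 ≤ j * (c + 1) := Nat.le_mul_of_pos_left _ hj
  have e1 : (j + 2) * (c + 1) - 1 = j * (c + 1) + 2 * c + 1 := by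
    rw [add_mul]; omega
  have e2 : (j + 2) * (c + 1) - 2 = j * (c + 1) + 2 * c := by
    rw [add_mul]; omega
  rw [e1, e2, Nat.add_sub_cancel]
  generalize j * (c + 1) = m at *
  have key : ∀ k i, i + k = c →
      (1 / 2 : ℝ) ^ (m + 2 * i + 1) * (Nat.choose (m + 2 * i) i : ℝ) ≤
      (1 / 2 : ℝ) ^ (m + 2 * c + 1) * (Nat.choose (m + 2 * c) c : ℝ) := by
    intro k
    induction k with
    | zero => intro i hi; obtain rfl : i = c := by omega
              exact le_rfl
    | succ k ih =>
      intro i hi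
      refine le_trans ?_ (ih (i + 1) (by omega))
      have hs : m + 2 * i + 2 ≤ m * m := by
        obtain ⟨d, rfl⟩ : ∃ d, m = c + 1 + d := ⟨m - (c + 1), by omega⟩
        have : i + 1 ≤ c := by omega
        have : 1 ≤ c := by omega
        nlinarith [Nat.zero_le (c * d), Nat.zero_le (d * d)]
      have h := choose_step m i hs
      have h' : (4 : ℝ) * (Nat.choose (m + 2 * i) i : ℝ) ≤
        (Nat.choose (m + 2 * (i + 1)) (i + 1) : ℝ) := by exact_mod_cast h
      have e : (1 / 2 : ℝ) ^ (m + 2 * i + 1) = (1 / 2 : ℝ) ^ (m + 2 * (i + 1) + 1) * 4 := by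
        rw [show m + 2 * (i + 1) + 1 = (m + 2 * i + 1) + 2 by ring, pow_add]; ring
      rw [e, mul_assoc]
      exact mul_le_mul_of_nonneg_left h' (by positivity)
  have := Finset.sum_le_card_nsmul (Finset.range (c + 1))
    (fun i => (1 / 2 : ℝ) ^ (m + 2 * i + 1) * (Nat.choose (m + 2 * i) i : ℝ)) _
    (fun i hi => key (c - i) i (by have := Finset.mem_range.mp hi; omega))
  rw [Finset.card_range, nsmul_eq_mul, ← mul_assoc] at this
  exact this
end

section
/- Let φ, ε_r, ε' be real numbers with 0 ≤ φ ≤ 1, 0 ≤ ε_r ≤ φ, and ε' ≥ 0, and let n_old, n_new be real numbers with 0 ≤ n_old ≤ n_new ≤ (1+ε')·n_old. If a real number R satisfies (φ − ε_r)·n_old ≤ R ≤ (φ + ε_r)·n_old, then (φ − (ε_r + ε'))·n_new ≤ R ≤ (φ + (ε_r + ε'))·n_new. -/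
theorem staleness_error :
    ∀ φ εr ε' n_old n_new R : ℝ,
      0 ≤ φ → φ ≤ 1 → 0 ≤ εr → εr ≤ φ → 0 ≤ ε' →
      0 ≤ n_old → n_old ≤ n_new → n_new ≤ (1 + ε') * n_old →
      (φ - εr) * n_old ≤ R → R ≤ (φ + εr) * n_old →
      (φ - (εr + ε')) * n_new ≤ R ∧ R ≤ (φ + (εr + ε')) * n_new := by
  intro φ εr ε' m n R h0 h1 h2 h3 h4 h5 h6 h7 h8 h9
  have a1 : (φ - εr) * (n - m) ≤ 1 * (n - m) :=
    mul_le_mul_of_nonneg_right (by linarith) (by linarith)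
  have a2 : ε' * m ≤ ε' * n := mul_le_mul_of_nonneg_left h6 h4
  have a3 : (φ + εr) * m ≤ (φ + εr) * n := mul_le_mul_of_nonneg_left h6 (by linarith)
  have a4 : 0 ≤ ε' * n := mul_nonneg h4 (by linarith)
  constructor <;> linarith
end
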